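/- Let Fr > 0, let f_b : ℝ → ℝ be differentiable, and let 𝓗, u_e, d : ℝ² → ℝ be differentiable functions of (t,x) satisfying at every point the apparent-topography equations: (i) ∂_t 𝓗 + ∂_x(𝓗 u_e) + ∂_t d = 0 and (ii) ∂_t(𝓗 u_e) + ∂_x(𝓗 u_e² + 𝓗²/(2Fr²)) + u_e ∂_t d = −(𝓗/Fr²)(f_b′ + ∂_x d). Then, with η := 𝓗 + f_b + d, the following energy balance holds at every point: ∂_t(𝓗 u_e²/2 + η²/(2Fr²)) + ∂_x( u_e (𝓗 u_e²/2 + 𝓗 η / Fr²) ) = −(u_e²/2) ∂_t d. -/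

import Mathlib

/-- Partial derivative in the first coordinate (time) of a function on ℝ². -/
noncomputable def pt2 (f : ℝ × ℝ → ℝ) (q : ℝ × ℝ) : ℝ :=
  deriv (fun s => f (s, q.2)) q.1

/-- Partial derivative in the second coordinate (space) of a function on ℝ². -/
noncomputable def px2 (f : ℝ × ℝ → ℝ) (q : ℝ × ℝ) : ℝ :=
  deriv (fun s => f (q.1, s)) q.2

/-!
With `g = 1 / Fr²`, the pressure and both topographic forces combine into `-g H ∂ₓη`, so the
momentum equation reads `∂ₜ(H u) + ∂ₓ(H u²) = -g H ∂ₓη - u ∂ₜd`, while the mass equation reads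
`∂ₜη + ∂ₓ(H u) = 0`, or equivalently `∂ₜH + ∂ₓ(H u) = -∂ₜd`. The power `g H u ∂ₓη` is exchanged
between kinetic and potential energy and cancels in the sum. What remains is `-u² ∂ₜd` from the
momentum equation and `+(u² / 2) ∂ₜd` from the mass source.
-/

section PartialDerivatives

variable {f g : ℝ × ℝ → ℝ} {q : ℝ × ℝ}

lemma differentiableAt_fst_slice (hf : DifferentiableAt ℝ f q) :
    DifferentiableAt ℝ (fun s => f (s, q.2)) q.1 :=
  hf.comp q.1 (differentiableAt_id.prodMk (differentiableAt_const q.2))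

lemma differentiableAt_snd_slice (hf : DifferentiableAt ℝ f q) :
    DifferentiableAt ℝ (fun s => f (q.1, s)) q.2 :=
  hf.comp q.2 ((differentiableAt_const q.1).prodMk differentiableAt_id)

lemma pt2_const (c : ℝ) (q : ℝ × ℝ) : pt2 (fun _ => c) q = 0 :=
  deriv_const q.1 c

lemma px2_const (c : ℝ) (q : ℝ × ℝ) : px2 (fun _ => c) q = 0 :=
  deriv_const q.2 c

lemma px2_comp_snd (b : ℝ → ℝ) (q : ℝ × ℝ) : px2 (fun p => b p.2) q = deriv b q.2 :=
  rfl

lemma pt2_add (hf : DifferentiableAt ℝ f q) (hg : DifferentiableAt ℝ g q) :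
    pt2 (fun p => f p + g p) q = pt2 f q + pt2 g q :=
  deriv_fun_add (differentiableAt_fst_slice hf) (differentiableAt_fst_slice hg)

lemma px2_add (hf : DifferentiableAt ℝ f q) (hg : DifferentiableAt ℝ g q) :
    px2 (fun p => f p + g p) q = px2 f q + px2 g q :=
  deriv_fun_add (differentiableAt_snd_slice hf) (differentiableAt_snd_slice hg)

lemma pt2_mul (hf : DifferentiableAt ℝ f q) (hg : DifferentiableAt ℝ g q) :
    pt2 (fun p => f p * g p) q = pt2 f q * g q + f q * pt2 g q :=
  deriv_fun_mul (differentiableAt_fst_slice hf) (differentiableAt_fst_slice hg)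

lemma px2_mul (hf : DifferentiableAt ℝ f q) (hg : DifferentiableAt ℝ g q) :
    px2 (fun p => f p * g p) q = px2 f q * g q + f q * px2 g q :=
  deriv_fun_mul (differentiableAt_snd_slice hf) (differentiableAt_snd_slice hg)

end PartialDerivatives

/-- The free surface elevation `η = H + f_b + d` of a layer of effective depth `H` over the apparent
topography `f_b + d`, where the bottom `f_b` depends on the space coordinate only. -/
def freeSurface (fb : ℝ → ℝ) (H d : ℝ × ℝ → ℝ) (q : ℝ × ℝ) : ℝ :=
  H q + fb q.2 + d q

section ShallowWater

variable {g : ℝ} {fb : ℝ → ℝ} {H u d η : ℝ × ℝ → ℝ} {q : ℝ × ℝ}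

lemma differentiableAt_freeSurface (hfb : DifferentiableAt ℝ fb q.2)
    (hH : DifferentiableAt ℝ H q) (hd : DifferentiableAt ℝ d q) :
    DifferentiableAt ℝ (freeSurface fb H d) q := by
  unfold freeSurface
  fun_prop

lemma pt2_freeSurface (hH : DifferentiableAt ℝ H q) (hd : DifferentiableAt ℝ d q) :
    pt2 (freeSurface fb H d) q = pt2 H q + pt2 d q := by
  have surface_slice := ((differentiableAt_fst_slice hH).hasDerivAt.add_const (fb q.2)).add
    (differentiableAt_fst_slice hd).hasDerivAt
  exact surface_slice.deriv

lemma px2_freeSurface (hfb : DifferentiableAt ℝ fb q.2)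
    (hH : DifferentiableAt ℝ H q) (hd : DifferentiableAt ℝ d q) :
    px2 (freeSurface fb H d) q = px2 H q + deriv fb q.2 + px2 d q := by
  unfold freeSurface
  simp (disch := fun_prop) only [px2_add, px2_comp_snd]

lemma px2_momentumFlux (g : ℝ) (hH : DifferentiableAt ℝ H q) (hu : DifferentiableAt ℝ u q) :
    px2 (fun p => H p * u p ^ 2 + g * H p ^ 2 / 2) q
      = px2 (fun p => H p * u p ^ 2) q + g * H q * px2 H q := by
  simp (disch := fun_prop) only [sq, div_eq_mul_inv, px2_add, px2_mul, px2_const]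
  ring

lemma kineticEnergy_transport (hH : DifferentiableAt ℝ H q) (hu : DifferentiableAt ℝ u q) :
    pt2 (fun p => H p * u p ^ 2 / 2) q + px2 (fun p => u p * (H p * u p ^ 2 / 2)) q
      = u q * (pt2 (fun p => H p * u p) q + px2 (fun p => H p * u p ^ 2) q)
        - u q ^ 2 / 2 * (pt2 H q + px2 (fun p => H p * u p) q) := by
  simp (disch := fun_prop) only [sq, div_eq_mul_inv, pt2_mul, pt2_const, px2_mul, px2_const]
  ring

lemma potentialEnergy_transport (g : ℝ) (hH : DifferentiableAt ℝ H q)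
    (hu : DifferentiableAt ℝ u q) (hη : DifferentiableAt ℝ η q) :
    pt2 (fun p => g * η p ^ 2 / 2) q + px2 (fun p => u p * (g * H p * η p)) q
      = g * η q * (pt2 η q + px2 (fun p => H p * u p) q) + g * H q * u q * px2 η q := by
  simp (disch := fun_prop) only [sq, div_eq_mul_inv, pt2_mul, pt2_const, px2_mul, px2_const]
  ring

lemma mechanicalEnergy_transport (g : ℝ) (hH : DifferentiableAt ℝ H q)
    (hu : DifferentiableAt ℝ u q) (hη : DifferentiableAt ℝ η q) :
    pt2 (fun p => H p * u p ^ 2 / 2 + g * η p ^ 2 / 2) q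
        + px2 (fun p => u p * (H p * u p ^ 2 / 2 + g * H p * η p)) q
      = u q * (pt2 (fun p => H p * u p) q + px2 (fun p => H p * u p ^ 2) q + g * H q * px2 η q)
        - u q ^ 2 / 2 * (pt2 H q + px2 (fun p => H p * u p) q)
        + g * η q * (pt2 η q + px2 (fun p => H p * u p) q) := by
  simp only [mul_add (u _)]
  rw [pt2_add (by fun_prop) (by fun_prop), px2_add (by fun_prop) (by fun_prop)]
  linear_combination kineticEnergy_transport hH hu + potentialEnergy_transport g hH hu hη

theorem apparent_topography_energy_balance_general
    (hfb : DifferentiableAt ℝ fb q.2) (hH : DifferentiableAt ℝ H q)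
    (hu : DifferentiableAt ℝ u q) (hd : DifferentiableAt ℝ d q)
    (hmass : pt2 H q + px2 (fun p => H p * u p) q + pt2 d q = 0)
    (hmom : pt2 (fun p => H p * u p) q + px2 (fun p => H p * u p ^ 2 + g * H p ^ 2 / 2) q
        + u q * pt2 d q = -(g * H q) * (deriv fb q.2 + px2 d q)) :
    pt2 (fun p => H p * u p ^ 2 / 2 + g * freeSurface fb H d p ^ 2 / 2) q
        + px2 (fun p => u p * (H p * u p ^ 2 / 2 + g * H p * freeSurface fb H d p)) q
      = -(u q ^ 2 / 2) * pt2 d q := by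
  have surface_transport : pt2 (freeSurface fb H d) q + px2 (fun p => H p * u p) q = 0 := by
    linear_combination pt2_freeSurface (fb := fb) hH hd + hmass
  have depth_transport : pt2 H q + px2 (fun p => H p * u p) q = -pt2 d q := by
    linear_combination hmass
  have momentum_transport : pt2 (fun p => H p * u p) q + px2 (fun p => H p * u p ^ 2) q
      + g * H q * px2 (freeSurface fb H d) q = -(u q * pt2 d q) := by
    rw [px2_momentumFlux g hH hu] at hmom
    rw [px2_freeSurface hfb hH hd]
    linear_combination hmom
  rw [mechanicalEnergy_transport g hH hu (differentiableAt_freeSurface hfb hH hd),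
    surface_transport, depth_transport, momentum_transport]
  ring

end ShallowWater

/-- Energy balance for the apparent-topography formulation of the extended
shallow water model: the dissipation of mechanical energy is driven by the
time variation of the viscous-layer displacement `d = δ̄δ₁`. -/
theorem apparent_topography_energy_balance
    (Fr : ℝ) (hFr : 0 < Fr)
    (fb : ℝ → ℝ) (hfb : Differentiable ℝ fb)
    (H ue d : ℝ × ℝ → ℝ)
    (hdH : Differentiable ℝ H) (hdue : Differentiable ℝ ue)
    (hdd : Differentiable ℝ d)
    -- (i) mass conservation with apparent topography
    (hmass : ∀ q : ℝ × ℝ,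
      pt2 H q + px2 (fun q => H q * ue q) q + pt2 d q = 0)
    -- (ii) momentum conservation with apparent topography
    (hmom : ∀ q : ℝ × ℝ,
      pt2 (fun q => H q * ue q) q
        + px2 (fun q => H q * (ue q) ^ 2 + (H q) ^ 2 / (2 * Fr ^ 2)) q
        + ue q * pt2 d q
      = -(H q / Fr ^ 2) * (deriv fb q.2 + px2 d q)) :
    ∀ q : ℝ × ℝ,
      pt2 (fun q => H q * (ue q) ^ 2 / 2
          + (H q + fb q.2 + d q) ^ 2 / (2 * Fr ^ 2)) q
        + px2 (fun q => ue q * (H q * (ue q) ^ 2 / 2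
          + H q * (H q + fb q.2 + d q) / Fr ^ 2)) q
      = -((ue q) ^ 2 / 2) * pt2 d q := by
  have half_div (a : ℝ) : a / (2 * Fr ^ 2) = (Fr ^ 2)⁻¹ * a / 2 := by ring
  have mul_div (a b : ℝ) : a * b / Fr ^ 2 = (Fr ^ 2)⁻¹ * a * b := by ring
  simp only [half_div, mul_div, div_eq_inv_mul (H _)] at hmom ⊢
  exact fun q => apparent_topography_energy_balance_general (hfb q.2) (hdH q) (hdue q) (hdd q)
    (hmass q) (hmom q)
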